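/- For every ρ ∈ (-1,0), every β ∈ ℝ and every t > 0, one has ∫_0^∞ φ(ρ, β, -x) · e^{-xt} dx = E_{-ρ, β−ρ}(-t), the integral being absolutely convergent. -/

import Mathlib

open MeasureTheory

/-- The Wright function `φ(ρ, β, x) = ∑ x^n / (n! Γ(β + ρ n))`. -/
noncomputable def wright (ρ β x : ℝ) : ℝ :=
  ∑' n : ℕ, x ^ n / ((n.factorial : ℝ) * Real.Gamma (β + ρ * n))

/-- The two-parameter Mittag-Leffler function `E_{α,β}(z) = ∑ z^n / Γ(β + αn)`. -/
noncomputable def mittagLeffler (α β z : ℝ) : ℝ :=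
  ∑' n : ℕ, z ^ n / Real.Gamma (β + α * n)

/-! Write `1 / Γ(b)` as a Hankel contour integral of `s ^ (-b) * exp s`, over the rays in the
directions `exp (± δ * I)` from a point `c > 0`. Summing under the integral gives

* `φ(ρ, β, x) = (2πi)⁻¹ ∫ exp s * s ^ (-β) * exp (x * s ^ (-ρ)) ds`,
* `E_{α,β}(z) = (2πi)⁻¹ ∫ exp s * s ^ (α - β) / (s ^ α - z) ds`, provided `|z| < |s| ^ α` on the
  contour.

For `α = -ρ < 1` one can take `δ > π / 2` with `α * δ < π / 2`, and then `c` so large that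
`Re (s ^ α) > |t|` on the whole contour. Fubini's theorem together with
`∫ x in (0, ∞), exp (-x * (t + s ^ α)) = 1 / (t + s ^ α)` turns the Laplace transform of the first
integral into the second one, at `z = -t`.

For Hankel's formula itself, both sides are continuous in `b` and satisfy `h b = b * h (b + 1)`, so
it is enough to treat `b ≤ -1`. In this range the contour can be moved to `c = 0`, where the
integral is a Gamma integral along a ray. -/

open Asymptotics Complex Filter Set Topology
open scoped Real

section GammaIntegral

lemma norm_cpow_mul_exp_neg_mul (a z : ℂ) {t : ℝ} (ht : 0 < t) :
    ‖(t : ℂ) ^ a * exp (-(z * t))‖ = t ^ a.re * Real.exp (-z.re * t) := by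
  rw [norm_mul, norm_cpow_eq_rpow_re_of_pos ht, norm_exp, neg_re, re_mul_ofReal, neg_mul]

lemma integrableOn_cpow_mul_exp_neg_mul {a z : ℂ} (ha : -1 < a.re) (hz : 0 < z.re) :
    IntegrableOn (fun t : ℝ => (t : ℂ) ^ a * exp (-(z * t))) (Ioi 0) := by
  have hreal : IntegrableOn (fun t : ℝ => t ^ a.re * Real.exp (-z.re * t)) (Ioi 0) := by
    simpa only [Real.rpow_one] using integrableOn_rpow_mul_exp_neg_mul_rpow ha one_pos hz
  refine hreal.mono' (by fun_prop) ?_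
  filter_upwards [ae_restrict_mem measurableSet_Ioi] with t ht
  exact (norm_cpow_mul_exp_neg_mul a z ht).le

lemma differentiableAt_integral_cpow_mul_exp_neg_mul {a z : ℂ} (ha : -1 < a.re) (hz : 0 < z.re) :
    DifferentiableAt ℂ (fun z : ℂ => ∫ t : ℝ in Ioi 0, (t : ℂ) ^ a * exp (-(z * t))) z := by
  have hhalf : {w : ℂ | z.re / 2 < w.re} ∈ 𝓝 z :=
    (isOpen_lt continuous_const continuous_re).mem_nhds (half_lt_self hz)
  refine (hasDerivAt_integral_of_dominated_loc_of_deriv_le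
    (μ := volume.restrict (Ioi 0)) (F := fun w (t : ℝ) => (t : ℂ) ^ a * exp (-(w * t)))
    (F' := fun w (t : ℝ) => -((t : ℂ) ^ (a + 1) * exp (-(w * t))))
    (bound := fun t : ℝ => ‖(t : ℂ) ^ (a + 1) * exp (-((z.re / 2 : ℝ) * t))‖) hhalf
    (.of_forall fun w => by fun_prop) (integrableOn_cpow_mul_exp_neg_mul ha hz)
    (by fun_prop) ?_ ?_ ?_).2.differentiableAt
  · filter_upwards [ae_restrict_mem measurableSet_Ioi] with t (ht : 0 < t) w (hw : _ < w.re)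
    rw [norm_neg, norm_cpow_mul_exp_neg_mul _ _ ht, norm_cpow_mul_exp_neg_mul _ _ ht, ofReal_re]
    gcongr
  · refine (integrableOn_cpow_mul_exp_neg_mul ?_ ?_).norm
    · rw [add_re, one_re]; linarith
    · rw [ofReal_re]; positivity
  · filter_upwards [ae_restrict_mem measurableSet_Ioi] with t (ht : 0 < t) w _
    have hexp : HasDerivAt (fun w : ℂ => exp (-(w * t))) (exp (-(w * t)) * -t) w := by
      simpa using ((hasDerivAt_id w).mul_const (t : ℂ)).neg.cexp
    refine (hexp.const_mul _).congr_deriv ?_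
    rw [cpow_add _ _ (ofReal_ne_zero.mpr ht.ne'), cpow_one]
    ring

/-- Mathlib's `Complex.integral_cpow_mul_exp_neg_mul_Ioi` extended from positive real `z` by the
identity theorem. -/
lemma integral_cpow_mul_exp_neg_mul_Ioi_of_re_pos {a z : ℂ} (ha : 0 < a.re) (hz : 0 < z.re) :
    ∫ t : ℝ in Ioi 0, (t : ℂ) ^ (a - 1) * exp (-(z * t)) = (1 / z) ^ a * Gamma a := by
  let H : Set ℂ := {z | 0 < z.re}
  have hH : IsOpen H := isOpen_lt continuous_const continuous_re
  have hleft : AnalyticOnNhd ℂ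
      (fun z : ℂ => ∫ t : ℝ in Ioi 0, (t : ℂ) ^ (a - 1) * exp (-(z * t))) H := by
    refine DifferentiableOn.analyticOnNhd (fun z hz => ?_) hH
    refine (differentiableAt_integral_cpow_mul_exp_neg_mul ?_ hz).differentiableWithinAt
    rw [sub_re, one_re]; linarith
  have hright : AnalyticOnNhd ℂ (fun z : ℂ => (1 / z) ^ a * Gamma a) H := by
    refine DifferentiableOn.analyticOnNhd (fun z (hz : 0 < z.re) => ?_) hH
    have hz0 : z ≠ 0 := slitPlane_ne_zero (Or.inl hz)
    have hinv : (1 / z).re > 0 := by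
      rw [one_div, inv_re]; exact div_pos hz (normSq_pos.mpr hz0)
    have hdiv : DifferentiableAt ℂ (fun z : ℂ => 1 / z) z := by
      fun_prop (disch := exact hz0)
    exact ((hdiv.cpow_const (Or.inl hinv)).mul_const _).differentiableWithinAt
  have hofReal : Tendsto ((↑) : ℝ → ℂ) (𝓝[≠] 1) (𝓝[≠] ((1 : ℝ) : ℂ)) :=
    continuous_ofReal.continuousAt.continuousWithinAt.tendsto_nhdsWithin
      fun x hx => ofReal_injective.ne hx
  have hpos : ∀ᶠ r : ℝ in 𝓝[≠] 1, 0 < r :=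
    (lt_mem_nhds one_pos).filter_mono nhdsWithin_le_nhds
  have hfreq : ∃ᶠ z : ℂ in 𝓝[≠] ((1 : ℝ) : ℂ),
      ∫ t : ℝ in Ioi 0, (t : ℂ) ^ (a - 1) * exp (-(z * t)) = (1 / z) ^ a * Gamma a :=
    hofReal.frequently (hpos.mono fun r hr => integral_cpow_mul_exp_neg_mul_Ioi ha hr).frequently
  exact hleft.eqOn_of_preconnected_of_frequently_eq hright
    (convex_halfSpace_re_gt 0).isPreconnected (by simp [H]) hfreq hz

end GammaIntegral

section ReciprocalGamma

lemma inv_realGamma_eq_mul (s : ℝ) : (Real.Gamma s)⁻¹ = s * (Real.Gamma (s + 1))⁻¹ := by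
  have h := one_div_Gamma_eq_self_mul_one_div_Gamma_add_one s
  rw [← ofReal_one, ← ofReal_add, Gamma_ofReal, Gamma_ofReal] at h
  exact_mod_cast h

lemma continuous_inv_realGamma : Continuous fun s : ℝ => (Real.Gamma s)⁻¹ := by
  have h := continuous_re.comp (differentiable_one_div_Gamma.continuous.comp continuous_ofReal)
  refine h.congr fun s => ?_
  simp only [Function.comp_apply, Gamma_ofReal, ← ofReal_inv, ofReal_re]

lemma inv_realGamma_eq_sin_mul {s : ℝ} (hs : s < 1) :
    (Real.Gamma s)⁻¹ = π⁻¹ * (Real.Gamma (1 - s) * Real.sin (π * (1 - s))) := by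
  have hpos : 0 < Real.Gamma (1 - s) := Real.Gamma_pos_of_pos (by linarith)
  have hsin : Real.sin (π * (1 - s)) = Real.sin (π * s) := by
    rw [mul_sub, mul_one, Real.sin_pi_sub]
  rw [hsin, eq_div_of_mul_eq hpos.ne' (Real.Gamma_mul_Gamma_one_sub s), inv_div,
    div_div_eq_mul_div, div_eq_inv_mul]

lemma eq_zero_of_continuous_of_eq_mul_shift {h : ℝ → ℝ} (hcont : Continuous h)
    (hshift : ∀ s, h s = s * h (s + 1)) {a : ℝ} (ha : ∀ s ≤ a, h s = 0) : h = 0 := by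
  have hstep : ∀ b, (∀ s ≤ b, h s = 0) → ∀ s ≤ b + 1, h s = 0 := by
    intro b hb
    have hne : ∀ s ≤ b + 1, s ≠ 1 → h s = 0 := fun s hsb hs1 => by
      have hprev := hshift (s - 1)
      rw [hb (s - 1) (by linarith), sub_add_cancel, eq_comm, mul_eq_zero] at hprev
      exact hprev.resolve_left (sub_ne_zero.mpr hs1)
    intro s hsb
    by_cases hs1 : s = 1
    -- The shift relation degenerates to `h 0 = 0` here, so the value at `1` comes from continuity.
    · subst hs1
      have hzero : EqOn h 0 (Iio 1) := fun s (hs : s < 1) => hne s (hs.le.trans hsb) hs.ne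
      exact hzero.closure hcont continuous_zero (by rw [closure_Iio]; exact self_mem_Iic)
    · exact hne s hsb hs1
  have hnat : ∀ n : ℕ, ∀ s ≤ a + n, h s = 0 := fun n => by
    induction n with
    | zero => simpa using ha
    | succ n ih => simpa [add_assoc] using hstep _ ih
  ext s
  obtain ⟨n, hn⟩ := exists_nat_ge (s - a)
  exact hnat n s (by linarith)

end ReciprocalGamma

section HankelRay

variable {δ c r : ℝ}

/-- The upper half of a Hankel contour: the ray leaving the real axis at `c` in the
direction `exp (δ * I)`, parametrised by arc length. -/
noncomputable def hankelRay (δ c r : ℝ) : ℂ := c + r * exp (δ * I)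

lemma hankelRay_zero : hankelRay δ c 0 = c := by simp [hankelRay]

lemma hankelRay_re : (hankelRay δ c r).re = c + r * Real.cos δ := by
  simp [hankelRay, exp_ofReal_mul_I_re]

lemma hankelRay_im : (hankelRay δ c r).im = r * Real.sin δ := by
  simp [hankelRay, exp_ofReal_mul_I_im]

lemma hankelRay_im_pos (hδ : 0 < Real.sin δ) (hr : 0 < r) : 0 < (hankelRay δ c r).im := by
  rw [hankelRay_im]; positivity

lemma hankelRay_mem_slitPlane (hδ : 0 < Real.sin δ) (hc : 0 < c) (hr : 0 ≤ r) :
    hankelRay δ c r ∈ slitPlane := by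
  rcases hr.eq_or_lt with rfl | hr
  · rw [hankelRay_zero]; exact Or.inl hc
  · exact Or.inr (hankelRay_im_pos hδ hr).ne'

lemma hankelRay_ne_zero (hδ : 0 < Real.sin δ) (hc : 0 < c) (hr : 0 ≤ r) : hankelRay δ c r ≠ 0 :=
  slitPlane_ne_zero (hankelRay_mem_slitPlane hδ hc hr)

lemma continuous_hankelRay : Continuous (hankelRay δ c) := by
  unfold hankelRay; fun_prop

lemma hasDerivAt_hankelRay : HasDerivAt (hankelRay δ c) (exp (δ * I)) r := by
  have hmul : HasDerivAt (fun r : ℝ => r * exp (δ * I)) (exp (δ * I)) r := by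
    simpa using (ofRealCLM.hasDerivAt (x := r)).mul_const (exp (δ * I))
  exact hmul.const_add (c : ℂ)

lemma hasDerivAt_hankelRay_left : HasDerivAt (fun c => hankelRay δ c r) 1 c :=
  (ofRealCLM.hasDerivAt (x := c)).add_const _

lemma norm_hankelRay_le : ‖hankelRay δ c r‖ ≤ |c| + |r| := by
  refine (norm_add_le _ _).trans_eq ?_
  rw [norm_mul, norm_exp_ofReal_mul_I, mul_one, norm_real, norm_real, Real.norm_eq_abs,
    Real.norm_eq_abs]

lemma abs_add_mul_cos_half_le_norm_hankelRay :
    |(c + r) * Real.cos (δ / 2)| ≤ ‖hankelRay δ c r‖ := by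
  refine abs_le_of_sq_le_sq ?_ (norm_nonneg _)
  have hhalf : Real.cos δ = 2 * Real.cos (δ / 2) ^ 2 - 1 := by
    rw [← Real.cos_two_mul, mul_div_cancel₀ _ two_ne_zero]
  have hnorm : ‖hankelRay δ c r‖ ^ 2 = ((c + r) * Real.cos (δ / 2)) ^ 2 +
      (c - r) ^ 2 * (1 - Real.cos (δ / 2) ^ 2) := by
    rw [Complex.sq_norm, normSq_apply, hankelRay_re, hankelRay_im]
    linear_combination r ^ 2 * Real.sin_sq_add_cos_sq δ + 2 * c * r * hhalf
  rw [hnorm]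
  exact le_add_of_nonneg_right
    (mul_nonneg (sq_nonneg _) (sub_nonneg.mpr (Real.cos_sq_le_one _)))

lemma isTheta_norm_hankelRay (hδ : 0 < Real.cos (δ / 2)) (hc : 0 ≤ c) :
    (fun r => ‖hankelRay δ c r‖) =Θ[atTop] fun r => r := by
  refine ⟨.of_bound 2 ?_, .of_bound (Real.cos (δ / 2))⁻¹ ?_⟩
  · filter_upwards [eventually_ge_atTop c, eventually_ge_atTop 0] with r hcr hr
    rw [norm_norm, Real.norm_eq_abs]
    refine norm_hankelRay_le.trans ?_
    rw [abs_of_nonneg hc, abs_of_nonneg hr]; linarith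
  · filter_upwards [eventually_ge_atTop 0] with r hr
    have hle := (le_abs_self _).trans
      (abs_add_mul_cos_half_le_norm_hankelRay (δ := δ) (c := c) (r := r))
    rw [norm_norm, Real.norm_of_nonneg hr, le_inv_mul_iff₀ hδ]
    nlinarith

lemma isTheta_norm_hankelRay_rpow (hδ : 0 < Real.cos (δ / 2)) (hc : 0 ≤ c) (p : ℝ) :
    (fun r => ‖hankelRay δ c r‖ ^ p) =Θ[atTop] fun r => r ^ p :=
  (isTheta_norm_hankelRay hδ hc).rpow (.of_forall fun _ => norm_nonneg _) (eventually_ge_atTop 0)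

end HankelRay

section HankelIntegrable

variable {δ c : ℝ} {f : ℂ → ℂ}

/-- The pullback of the contour integrand `exp s * f s ds` to `hankelRay δ c`. -/
noncomputable def hankelIntegrand (δ c : ℝ) (f : ℂ → ℂ) (r : ℝ) : ℂ :=
  exp (δ * I) * (exp (hankelRay δ c r) * f (hankelRay δ c r))

/-- Absolute convergence of the integral of `exp s * f s ds` along `hankelRay δ c`. -/
def HankelIntegrable (δ c : ℝ) (f : ℂ → ℂ) : Prop :=
  IntegrableOn (hankelIntegrand δ c f) (Ioi 0)

/-- The contour integral `(2πi)⁻¹ ∫ exp s * f s ds` over `hankelRay δ c` and its complex conjugate,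
for `f` commuting with complex conjugation: the two halves combine into an imaginary part. -/
noncomputable def hankelIntegral (δ c : ℝ) (f : ℂ → ℂ) : ℝ :=
  π⁻¹ * (∫ r in Ioi 0, hankelIntegrand δ c f r).im

lemma norm_hankelIntegrand (r : ℝ) : ‖hankelIntegrand δ c f r‖ =
    Real.exp (c + r * Real.cos δ) * ‖f (hankelRay δ c r)‖ := by
  rw [hankelIntegrand, norm_mul, norm_mul, norm_exp_ofReal_mul_I, one_mul, norm_exp, hankelRay_re]

lemma measurable_hankelIntegrand (hf : Measurable f) : Measurable (hankelIntegrand δ c f) := by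
  have := (continuous_hankelRay (δ := δ) (c := c)).measurable
  unfold hankelIntegrand
  fun_prop

lemma HankelIntegrable.const_mul (hf : HankelIntegrable δ c f) (k : ℂ) :
    HankelIntegrable δ c fun s => k * f s :=
  (Integrable.const_mul hf k).congr (.of_forall fun r => by simp only [hankelIntegrand]; ring)

lemma hankelIntegrable_of_isBigO (hδ : 0 < Real.sin δ) (hc : 0 < c)
    (hf : ContinuousOn f slitPlane) {ε : ℝ} (hε : ε + Real.cos δ < 0)
    (hO : (fun r => f (hankelRay δ c r)) =O[atTop] fun r => Real.exp (ε * r)) :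
    HankelIntegrable δ c f := by
  have hmaps : MapsTo (hankelRay δ c) (Ici 0) slitPlane :=
    fun r hr => hankelRay_mem_slitPlane hδ hc hr
  have hcont : ContinuousOn (hankelIntegrand δ c f) (Ici 0) :=
    continuousOn_const.mul (continuous_hankelRay.cexp.continuousOn.mul
      (hf.comp continuous_hankelRay.continuousOn hmaps))
  have hbound : hankelIntegrand δ c f =O[atTop] fun r => Real.exp (-(-(ε + Real.cos δ)) * r) := by
    refine .of_norm_left ?_
    simp only [norm_hankelIntegrand, Real.exp_add, mul_assoc]
    refine (((isBigO_refl _ _).mul hO.norm_left).const_mul_left _).congr_right fun r => ?_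
    rw [← Real.exp_add]; ring_nf
  exact ((hcont.locallyIntegrableOn measurableSet_Ici).integrableOn_of_isBigO_atTop hbound
    ⟨Ioi 0, Ioi_mem_atTop 0, exp_neg_integrableOn_Ioi 0 (by linarith)⟩).mono_set Ioi_subset_Ici_self

end HankelIntegrable

section Powers

variable {δ c p : ℝ}

lemma sin_pos_of_mem_Ioo_pi_div_two_pi (hδ : δ ∈ Ioo (π / 2) π) : 0 < Real.sin δ :=
  Real.sin_pos_of_pos_of_lt_pi (Real.pi_div_two_pos.trans hδ.1) hδ.2

lemma cos_neg_of_mem_Ioo_pi_div_two_pi (hδ : δ ∈ Ioo (π / 2) π) : Real.cos δ < 0 :=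
  Real.cos_neg_of_pi_div_two_lt_of_lt hδ.1 (by linarith [hδ.2, Real.pi_pos])

lemma cos_half_pos_of_mem_Ioo_pi_div_two_pi (hδ : δ ∈ Ioo (π / 2) π) : 0 < Real.cos (δ / 2) :=
  Real.cos_pos_of_mem_Ioo ⟨by linarith [hδ.1, Real.pi_pos], by linarith [hδ.2]⟩

lemma isLittleO_rpow_id_atTop {α : ℝ} (hα : α < 1) : (fun r : ℝ => r ^ α) =o[atTop] fun r => r := by
  refine (isLittleO_iff_tendsto' ((eventually_ne_atTop 0).mono fun r hr h => (hr h).elim)).mpr ?_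
  refine (tendsto_rpow_neg_atTop (sub_pos.mpr hα)).congr' ?_
  filter_upwards [eventually_gt_atTop 0] with r hr
  rw [neg_sub, Real.rpow_sub_one hr.ne']

lemma norm_hankelRay_rpow_isLittleO_exp (hδ : 0 < Real.cos (δ / 2)) (hc : 0 ≤ c) (p : ℝ) {ε : ℝ}
    (hε : 0 < ε) : (fun r => ‖hankelRay δ c r‖ ^ p) =o[atTop] fun r => Real.exp (ε * r) :=
  (isTheta_norm_hankelRay_rpow hδ hc p).trans_isLittleO (isLittleO_rpow_exp_pos_mul_atTop p hε)

lemma exp_mul_norm_hankelRay_rpow_isBigO_exp (hδ : 0 < Real.cos (δ / 2)) (hc : 0 ≤ c) {α : ℝ}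
    (hα : α < 1) (k : ℝ) {ε : ℝ} (hε : 0 < ε) :
    (fun r => Real.exp (k * ‖hankelRay δ c r‖ ^ α)) =O[atTop] fun r => Real.exp (ε * r) := by
  have hsublinear : (fun r => k * ‖hankelRay δ c r‖ ^ α) =o[atTop] fun r => r := by
    refine IsLittleO.const_mul_left ?_ k
    refine (isTheta_norm_hankelRay_rpow hδ hc α).trans_isLittleO ?_
    exact isLittleO_rpow_id_atTop hα
  refine .of_bound 1 ?_
  filter_upwards [hsublinear.def hε, eventually_ge_atTop 0] with r hr hr0
  rw [one_mul, Real.norm_of_nonneg (Real.exp_nonneg _), Real.norm_of_nonneg (Real.exp_nonneg _)]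
  rw [Real.norm_of_nonneg hr0] at hr
  exact Real.exp_le_exp.mpr ((le_abs_self _).trans hr)

lemma hankelIntegrable_cpow_mul_exp (hδ : δ ∈ Ioo (π / 2) π) (hc : 0 < c) (p : ℝ) {α : ℝ}
    (hα : α < 1) (k : ℝ) :
    HankelIntegrable δ c fun s => s ^ (p : ℂ) * exp ((k * ‖s‖ ^ α : ℝ) : ℂ) := by
  have hcos := cos_neg_of_mem_Ioo_pi_div_two_pi hδ
  have hhalf := cos_half_pos_of_mem_Ioo_pi_div_two_pi hδ
  have hε : 0 < -Real.cos δ / 4 := by linarith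
  refine hankelIntegrable_of_isBigO (sin_pos_of_mem_Ioo_pi_div_two_pi hδ) hc ?_
    (ε := -Real.cos δ / 4 + -Real.cos δ / 4) (by linarith) (.of_norm_left ?_)
  · intro s hs
    have hnorm : ‖s‖ ≠ 0 := norm_ne_zero_iff.mpr (slitPlane_ne_zero hs)
    have hpow : ContinuousAt (fun s : ℂ => ‖s‖ ^ α) s :=
      continuous_norm.continuousAt.rpow_const (Or.inl hnorm)
    exact ((continuousAt_cpow_const hs).mul
      (continuous_ofReal.continuousAt.comp (hpow.const_mul k)).cexp).continuousWithinAt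
  · simp only [norm_mul, norm_cpow_real, norm_exp, ofReal_re, add_mul, Real.exp_add]
    exact (norm_hankelRay_rpow_isLittleO_exp hhalf hc.le p hε).isBigO.mul
      (exp_mul_norm_hankelRay_rpow_isBigO_exp hhalf hc.le hα k hε)

lemma hankelIntegrable_cpow (hδ : δ ∈ Ioo (π / 2) π) (hc : 0 < c) (p : ℝ) :
    HankelIntegrable δ c fun s => s ^ (p : ℂ) := by
  simpa using hankelIntegrable_cpow_mul_exp hδ hc p zero_lt_one 0

lemma norm_hankelIntegrand_cpow_le (hδ : 0 < Real.cos (δ / 2)) (hp : 0 ≤ p) {C r : ℝ}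
    (hc : |c| ≤ C) (hr : 0 ≤ r) : ‖hankelIntegrand δ c (fun s => s ^ (p : ℂ)) r‖ ≤
      (Real.cos (δ / 2) ^ p)⁻¹ * ‖hankelIntegrand δ C (fun s => s ^ (p : ℂ)) r‖ := by
  have hray : ‖hankelRay δ c r‖ * Real.cos (δ / 2) ≤ ‖hankelRay δ C r‖ := by
    refine le_trans ?_ ((le_abs_self _).trans abs_add_mul_cos_half_le_norm_hankelRay)
    gcongr
    exact norm_hankelRay_le.trans (by rw [abs_of_nonneg hr]; gcongr)
  have hpow : ‖hankelRay δ c r‖ ^ p * Real.cos (δ / 2) ^ p ≤ ‖hankelRay δ C r‖ ^ p := by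
    rw [← Real.mul_rpow (norm_nonneg _) hδ.le]
    exact Real.rpow_le_rpow (by positivity) hray hp
  simp only [norm_hankelIntegrand, norm_cpow_real]
  rw [mul_left_comm]
  gcongr
  · exact (le_abs_self c).trans hc
  · rwa [le_inv_mul_iff₀' (by positivity)]

lemma hankelIntegrable_cpow_of_nonneg (hδ : δ ∈ Ioo (π / 2) π) (c : ℝ) (hp : 0 ≤ p) :
    HankelIntegrable δ c fun s => s ^ (p : ℂ) := by
  refine Integrable.mono' ((hankelIntegrable_cpow hδ (by positivity : 0 < |c| + 1) p).norm.const_mul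
    (Real.cos (δ / 2) ^ p)⁻¹)
    (measurable_hankelIntegrand (by fun_prop)).aestronglyMeasurable ?_
  filter_upwards [ae_restrict_mem measurableSet_Ioi] with r hr
  exact norm_hankelIntegrand_cpow_le (cos_half_pos_of_mem_Ioo_pi_div_two_pi hδ) hp
    (by linarith) (le_of_lt hr)

lemma integral_hankelIntegrand_add_deriv {f f' : ℂ → ℂ} (hδ : 0 < Real.sin δ)
    (hcont : ContinuousAt f c) (hderiv : ∀ z : ℂ, 0 < z.im → HasDerivAt f (f' z) z)
    (hf : HankelIntegrable δ c f) (hf' : HankelIntegrable δ c f') :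
    (∫ r in Ioi 0, hankelIntegrand δ c f r) + ∫ r in Ioi 0, hankelIntegrand δ c f' r =
      -(exp c * f c) := by
  have hderivRay : ∀ r ∈ Ioi (0 : ℝ), HasDerivAt
      (fun r => exp (hankelRay δ c r) * f (hankelRay δ c r))
      (hankelIntegrand δ c f r + hankelIntegrand δ c f' r) r := fun r hr => by
    refine (((hasDerivAt_exp _).mul (hderiv _ (hankelRay_im_pos hδ hr))).comp r
      hasDerivAt_hankelRay).congr_deriv ?_
    simp only [hankelIntegrand]
    ring
  have hint : IntegrableOn (fun r => exp (hankelRay δ c r) * f (hankelRay δ c r)) (Ioi 0) :=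
    (integrable_const_mul_iff (exp_ne_zero (δ * I)).isUnit _).mp hf
  have hstart : ContinuousWithinAt (fun r => exp (hankelRay δ c r) * f (hankelRay δ c r))
      (Ici 0) 0 := by
    have hray : ContinuousAt (hankelRay δ c) 0 := continuous_hankelRay.continuousAt
    exact (hray.cexp.mul (hcont.comp_of_eq hray hankelRay_zero)).continuousWithinAt
  rw [← integral_add hf hf', integral_Ioi_of_hasDerivAt_of_tendsto hstart hderivRay (hf.add hf')
    (tendsto_zero_of_hasDerivAt_of_integrableOn_Ioi hderivRay (hf.add hf') hint), hankelRay_zero,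
    zero_sub]

end Powers

section ReciprocalGammaIntegral

variable {δ c p : ℝ}

lemma hankelIntegral_const_mul (f : ℂ → ℂ) (k : ℝ) :
    hankelIntegral δ c (fun s => k * f s) = k * hankelIntegral δ c f := by
  have hmul : hankelIntegrand δ c (fun s => k * f s) = fun r => k * hankelIntegrand δ c f r := by
    ext r; simp only [hankelIntegrand]; ring
  rw [hankelIntegral, hmul, integral_const_mul, im_ofReal_mul, mul_left_comm, hankelIntegral]

lemma hasDerivAt_cpow_ofReal_const {z : ℂ} (hz : z ∈ slitPlane) (p : ℝ) :
    HasDerivAt (fun s : ℂ => s ^ (p : ℂ)) (p * z ^ ((p - 1 : ℝ) : ℂ)) z := by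
  simpa using (hasDerivAt_id z).cpow_const (c := (p : ℂ)) hz

lemma hankelIntegral_cpow_add_mul (hδ : 0 < Real.sin δ) (hc : 0 ≤ c)
    (hcont : ContinuousAt (fun s : ℂ => s ^ (p : ℂ)) c)
    (hp : HankelIntegrable δ c fun s => s ^ (p : ℂ))
    (hp' : HankelIntegrable δ c fun s => s ^ ((p - 1 : ℝ) : ℂ)) :
    hankelIntegral δ c (fun s => s ^ (p : ℂ)) +
      p * hankelIntegral δ c (fun s => s ^ ((p - 1 : ℝ) : ℂ)) = 0 := by
  have hparts := congrArg im (integral_hankelIntegrand_add_deriv hδ hcont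
    (fun z hz => hasDerivAt_cpow_ofReal_const (Or.inr hz.ne') p) hp (hp'.const_mul p))
  have hreal : (-(exp c * (c : ℂ) ^ (p : ℂ))).im = 0 := by
    rw [← ofReal_exp, ← ofReal_cpow hc, ← ofReal_mul, ← ofReal_neg, ofReal_im]
  rw [hreal, add_im] at hparts
  rw [← hankelIntegral_const_mul, hankelIntegral, hankelIntegral, ← mul_add, hparts, mul_zero]

lemma hasDerivAt_integral_hankelIntegrand_cpow (hδ : δ ∈ Ioo (π / 2) π) (hp : 1 ≤ p) (c : ℝ) :
    HasDerivAt (fun c => ∫ r in Ioi 0, hankelIntegrand δ c (fun s => s ^ (p : ℂ)) r)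
      (∫ r in Ioi 0, (hankelIntegrand δ c (fun s => s ^ (p : ℂ)) r +
        p * hankelIntegrand δ c (fun s => s ^ ((p - 1 : ℝ) : ℂ)) r)) c := by
  have hsin := sin_pos_of_mem_Ioo_pi_div_two_pi hδ
  have hhalf := cos_half_pos_of_mem_Ioo_pi_div_two_pi hδ
  have hp0 : 0 ≤ p := by linarith
  have hp1 : 0 ≤ p - 1 := by linarith
  refine (hasDerivAt_integral_of_dominated_loc_of_deriv_le (Metric.ball_mem_nhds c one_pos)
    (μ := volume.restrict (Ioi 0)) (F := fun c => hankelIntegrand δ c fun s => s ^ (p : ℂ))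
    (F' := fun c r => hankelIntegrand δ c (fun s => s ^ (p : ℂ)) r +
      p * hankelIntegrand δ c (fun s => s ^ ((p - 1 : ℝ) : ℂ)) r)
    (bound := fun r =>
      (Real.cos (δ / 2) ^ p)⁻¹ * ‖hankelIntegrand δ (|c| + 1) (fun s => s ^ (p : ℂ)) r‖ +
      p * ((Real.cos (δ / 2) ^ (p - 1))⁻¹ *
        ‖hankelIntegrand δ (|c| + 1) (fun s => s ^ ((p - 1 : ℝ) : ℂ)) r‖))
    (.of_forall fun c => (measurable_hankelIntegrand (by fun_prop)).aestronglyMeasurable)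
    (hankelIntegrable_cpow_of_nonneg hδ c hp0)
    ((measurable_hankelIntegrand (by fun_prop)).add
      ((measurable_hankelIntegrand (by fun_prop)).const_mul _)).aestronglyMeasurable ?_ ?_ ?_).2
  · filter_upwards [ae_restrict_mem measurableSet_Ioi] with r (hr : 0 < r) x hx
    have hxc : |x| ≤ |c| + 1 := by
      rw [Metric.mem_ball, Real.dist_eq] at hx
      linarith [abs_sub_abs_le_abs_sub x c]
    refine (norm_add_le _ _).trans (add_le_add
      (norm_hankelIntegrand_cpow_le hhalf hp0 hxc hr.le) ?_)
    rw [norm_mul, norm_real, Real.norm_of_nonneg hp0]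
    gcongr
    exact norm_hankelIntegrand_cpow_le hhalf hp1 hxc hr.le
  · exact ((hankelIntegrable_cpow_of_nonneg hδ _ hp0).norm.const_mul _).add
      (((hankelIntegrable_cpow_of_nonneg hδ _ hp1).norm.const_mul _).const_mul _)
  · filter_upwards [ae_restrict_mem measurableSet_Ioi] with r (hr : 0 < r) x _
    refine ((((hasDerivAt_exp _).mul (hasDerivAt_cpow_ofReal_const
      (Or.inr (hankelRay_im_pos hsin hr).ne') p)).comp x
      hasDerivAt_hankelRay_left).const_mul (exp (δ * I))).congr_deriv ?_
    simp only [hankelIntegrand]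
    ring

lemma hasDerivAt_hankelIntegral_cpow (hδ : δ ∈ Ioo (π / 2) π) (hp : 1 ≤ p) (hc : 0 ≤ c) :
    HasDerivAt (fun c => hankelIntegral δ c fun s => s ^ (p : ℂ)) 0 c := by
  have hp0 : HankelIntegrable δ c fun s => s ^ (p : ℂ) :=
    hankelIntegrable_cpow_of_nonneg hδ c (by linarith)
  have hp1 : HankelIntegrable δ c fun s => s ^ ((p - 1 : ℝ) : ℂ) :=
    hankelIntegrable_cpow_of_nonneg hδ c (by linarith)
  have hcont : ContinuousAt (fun s : ℂ => s ^ (p : ℂ)) c :=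
    continuousAt_cpow_const_of_re_pos (Or.inl (by simpa using hc)) (by rw [ofReal_re]; linarith)
  have hderiv := (imCLM.hasFDerivAt.comp_hasDerivAt c
    (hasDerivAt_integral_hankelIntegrand_cpow hδ hp c)).const_mul π⁻¹
  refine hderiv.congr_deriv (Eq.trans ?_
    (hankelIntegral_cpow_add_mul (sin_pos_of_mem_Ioo_pi_div_two_pi hδ) hc hcont hp0 hp1))
  rw [integral_add hp0 (Integrable.const_mul hp1 _), integral_const_mul, imCLM_apply, add_im,
    im_ofReal_mul, mul_add, mul_left_comm]
  rfl

lemma hankelIntegral_cpow_eq_hankelIntegral_zero (hδ : δ ∈ Ioo (π / 2) π) (hp : 1 ≤ p)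
    (hc : 0 ≤ c) :
    hankelIntegral δ c (fun s => s ^ (p : ℂ)) = hankelIntegral δ 0 fun s => s ^ (p : ℂ) :=
  constant_of_has_deriv_right_zero
    (fun _ hx => (hasDerivAt_hankelIntegral_cpow hδ hp hx.1).continuousAt.continuousWithinAt)
    (fun _ hx => (hasDerivAt_hankelIntegral_cpow hδ hp hx.1).hasDerivWithinAt)
    c (right_mem_Icc.mpr hc)

lemma ofReal_mul_cpow {r : ℝ} (hr : 0 < r) {z : ℂ} (hz : z ≠ 0) (a : ℂ) :
    (r * z) ^ a = (r : ℂ) ^ a * z ^ a := by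
  have hr0 : (r : ℂ) ≠ 0 := ofReal_ne_zero.mpr hr.ne'
  rw [cpow_def_of_ne_zero (mul_ne_zero hr0 hz), cpow_def_of_ne_zero hr0, cpow_def_of_ne_zero hz,
    log_ofReal_mul hr hz, ofReal_log hr.le, add_mul, exp_add]

lemma exp_ofReal_mul_I_cpow {θ : ℝ} (hθ : θ ∈ Ioc (-π) π) (a : ℂ) :
    exp (θ * I) ^ a = exp (θ * I * a) := by
  have hlog : log (exp (θ * I)) = θ * I := log_exp (by simpa using hθ.1) (by simpa using hθ.2)
  rw [cpow_def_of_ne_zero (exp_ne_zero _), hlog]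

lemma hankelIntegrand_zero_cpow (hδ : δ ∈ Ioc (-π) π) (p : ℝ) {r : ℝ} (hr : 0 < r) :
    hankelIntegrand δ 0 (fun s => s ^ (p : ℂ)) r =
      exp (δ * I * ((p + 1 : ℝ) : ℂ)) * ((r : ℂ) ^ (p : ℂ) * exp (-(-exp (δ * I) * r))) := by
  have hpow : (r * exp (δ * I)) ^ (p : ℂ) = (r : ℂ) ^ (p : ℂ) * exp (δ * I * p) := by
    rw [ofReal_mul_cpow hr (exp_ne_zero _), exp_ofReal_mul_I_cpow hδ]
  rw [hankelIntegrand, hankelRay, ofReal_zero, zero_add, hpow, ofReal_add, ofReal_one, mul_add,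
    mul_one, exp_add]
  ring_nf

lemma hankelIntegral_zero_cpow (hδ : δ ∈ Ioo (π / 2) π) (hp : -1 < p) :
    hankelIntegral δ 0 (fun s => s ^ (p : ℂ)) = (Real.Gamma (-p))⁻¹ := by
  have hδπ : δ ∈ Ioc (-π) π := ⟨by linarith [hδ.1, Real.pi_pos], hδ.2.le⟩
  have hδπ' : π - δ ∈ Ioc (-π) π :=
    ⟨by linarith [hδ.2, Real.pi_pos], by linarith [hδ.1, Real.pi_pos]⟩
  have hre : 0 < (-exp (δ * I)).re := by
    rw [neg_re, exp_ofReal_mul_I_re]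
    linarith [cos_neg_of_mem_Ioo_pi_div_two_pi hδ]
  have hinv : 1 / -exp (δ * I) = exp ((π - δ : ℝ) * I) := by
    rw [ofReal_sub, sub_mul, exp_sub, exp_pi_mul_I, div_neg, neg_div]
  have hgamma := integral_cpow_mul_exp_neg_mul_Ioi_of_re_pos (a := ((p + 1 : ℝ) : ℂ))
    (by rw [ofReal_re]; linarith) hre
  rw [hinv, exp_ofReal_mul_I_cpow hδπ', ← ofReal_one, ← ofReal_sub, add_sub_cancel_right,
    Gamma_ofReal] at hgamma
  have hphase : exp (δ * I * ((p + 1 : ℝ) : ℂ)) * exp ((π - δ : ℝ) * I * ((p + 1 : ℝ) : ℂ)) =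
      exp ((π * (p + 1) : ℝ) * I) := by
    rw [← exp_add]; push_cast; ring_nf
  rw [hankelIntegral, setIntegral_congr_fun measurableSet_Ioi
    fun r hr => hankelIntegrand_zero_cpow hδπ p hr, integral_const_mul, hgamma, ← mul_assoc, hphase,
    mul_comm _ (Real.Gamma _ : ℂ), im_ofReal_mul, exp_ofReal_mul_I_im,
    inv_realGamma_eq_sin_mul (by linarith), sub_neg_eq_add, add_comm 1 p]

lemma rpow_le_rpow_add_rpow {x a b q : ℝ} (hx : 0 < x) (ha : a ≤ q) (hb : q ≤ b) :
    x ^ q ≤ x ^ a + x ^ b := by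
  rcases le_total x 1 with hx1 | hx1
  · exact (Real.rpow_le_rpow_of_exponent_ge hx hx1 ha).trans
      (le_add_of_nonneg_right (by positivity))
  · exact (Real.rpow_le_rpow_of_exponent_le hx1 hb).trans (le_add_of_nonneg_left (by positivity))

lemma continuous_hankelIntegral_cpow (hδ : δ ∈ Ioo (π / 2) π) (hc : 0 < c) :
    Continuous fun p : ℝ => hankelIntegral δ c fun s => s ^ (p : ℂ) := by
  have hne : ∀ r > 0, hankelRay δ c r ≠ 0 := fun r hr =>
    hankelRay_ne_zero (sin_pos_of_mem_Ioo_pi_div_two_pi hδ) hc (le_of_lt hr)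
  refine continuous_const.mul (continuous_im.comp (continuous_iff_continuousAt.mpr fun q => ?_))
  refine continuousAt_of_dominated
    (bound := fun r => ‖hankelIntegrand δ c (fun s => s ^ ((q - 1 : ℝ) : ℂ)) r‖ +
      ‖hankelIntegrand δ c (fun s => s ^ ((q + 1 : ℝ) : ℂ)) r‖)
    (.of_forall fun p => (measurable_hankelIntegrand (by fun_prop)).aestronglyMeasurable) ?_
    ((hankelIntegrable_cpow hδ hc _).norm.add (hankelIntegrable_cpow hδ hc _).norm) ?_
  · filter_upwards [Ioo_mem_nhds (sub_one_lt q) (lt_add_one q)] with p hp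
    filter_upwards [ae_restrict_mem measurableSet_Ioi] with r hr
    simp only [norm_hankelIntegrand, norm_cpow_real, ← mul_add]
    gcongr
    exact rpow_le_rpow_add_rpow (norm_pos_iff.mpr (hne r hr)) hp.1.le hp.2.le
  · filter_upwards [ae_restrict_mem measurableSet_Ioi] with r hr
    exact continuousAt_const.mul (continuousAt_const.mul
      (continuous_ofReal.continuousAt.const_cpow (Or.inl (hne r hr))))

lemma hankelIntegral_cpow (hδ : δ ∈ Ioo (π / 2) π) (hc : 0 < c) (p : ℝ) :
    hankelIntegral δ c (fun s => s ^ (p : ℂ)) = (Real.Gamma (-p))⁻¹ := by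
  let h (s : ℝ) : ℝ := hankelIntegral δ c (fun z => z ^ ((-s : ℝ) : ℂ)) - (Real.Gamma s)⁻¹
  have hcont : Continuous h :=
    ((continuous_hankelIntegral_cpow hδ hc).comp continuous_neg).sub continuous_inv_realGamma
  have hshift : ∀ s, h s = s * h (s + 1) := fun s => by
    have hrec := hankelIntegral_cpow_add_mul (sin_pos_of_mem_Ioo_pi_div_two_pi hδ) hc.le
      (continuousAt_cpow_const (Or.inl hc)) (hankelIntegrable_cpow hδ hc (-s))
      (hankelIntegrable_cpow hδ hc (-s - 1))
    simp only [h, neg_add']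
    linear_combination hrec - inv_realGamma_eq_mul s
  have hle : ∀ s ≤ -1, h s = 0 := fun s hs => by
    rw [sub_eq_zero, hankelIntegral_cpow_eq_hankelIntegral_zero hδ (by linarith) hc.le,
      hankelIntegral_zero_cpow hδ (by linarith), neg_neg]
  have hzero := congrFun (eq_zero_of_continuous_of_eq_mul_shift hcont hshift hle) (-p)
  simpa only [h, neg_neg] using sub_eq_zero.mp hzero

end ReciprocalGammaIntegral

section SeriesAndLaplace

variable {δ c : ℝ}

lemma hasSum_hankelIntegral {ι : Type*} [Countable ι] {F : ι → ℂ → ℂ} {f g : ℂ → ℂ}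
    {b : ι → ℂ → ℝ} (hF : ∀ n, Measurable (F n))
    (hFb : ∀ n, ∀ r > 0, ‖F n (hankelRay δ c r)‖ ≤ b n (hankelRay δ c r))
    (hbg : ∀ r > 0, HasSum (fun n => b n (hankelRay δ c r)) ‖g (hankelRay δ c r)‖)
    (hg : HankelIntegrable δ c g)
    (hf : ∀ r > 0, HasSum (fun n => F n (hankelRay δ c r)) (f (hankelRay δ c r))) :
    HasSum (fun n => hankelIntegral δ c (F n)) (hankelIntegral δ c f) := by
  let bound (n : ι) (r : ℝ) : ℝ := Real.exp (c + r * Real.cos δ) * b n (hankelRay δ c r)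
  have hbound : ∀ r ∈ Ioi (0 : ℝ), HasSum (fun n => bound n r) ‖hankelIntegrand δ c g r‖ :=
    fun r hr => by rw [norm_hankelIntegrand]; exact (hbg r hr).mul_left _
  refine (Complex.hasSum_im (hasSum_integral_of_dominated_convergence bound
    (fun n => (measurable_hankelIntegrand (hF n)).aestronglyMeasurable) (fun n => ?_) ?_ ?_
    ?_)).mul_left π⁻¹
  · filter_upwards [ae_restrict_mem measurableSet_Ioi] with r hr
    rw [norm_hankelIntegrand]
    exact mul_le_mul_of_nonneg_left (hFb n r hr) (Real.exp_nonneg _)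
  · filter_upwards [ae_restrict_mem measurableSet_Ioi] with r hr using (hbound r hr).summable
  · refine hg.norm.congr ?_
    filter_upwards [ae_restrict_mem measurableSet_Ioi] with r hr using (hbound r hr).tsum_eq.symm
  · filter_upwards [ae_restrict_mem measurableSet_Ioi] with r hr
    exact ((hf r hr).mul_left _).mul_left _

lemma cpow_add_mul_natCast {s : ℂ} (hs : s ≠ 0) (p q : ℝ) (n : ℕ) :
    s ^ ((p + q * n : ℝ) : ℂ) = s ^ (p : ℂ) * (s ^ (q : ℂ)) ^ n := by
  rw [← cpow_mul_nat, ← cpow_add _ _ hs]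
  push_cast
  rfl

lemma hasSum_pow_mul_cpow_exp {s : ℂ} (hs : s ≠ 0) (ρ β x : ℝ) :
    HasSum (fun n : ℕ => ((x ^ n / n.factorial : ℝ) : ℂ) * s ^ ((-(β + ρ * n) : ℝ) : ℂ))
      (s ^ ((-β : ℝ) : ℂ) * exp (x * s ^ ((-ρ : ℝ) : ℂ))) := by
  have hexp := (NormedSpace.expSeries_div_hasSum_exp
    ((x : ℂ) * s ^ ((-ρ : ℝ) : ℂ))).mul_left (s ^ ((-β : ℝ) : ℂ))
  rw [← exp_eq_exp_ℂ] at hexp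
  refine hexp.congr_fun fun n => ?_
  rw [neg_add, ← neg_mul, cpow_add_mul_natCast hs, mul_pow]
  push_cast
  ring

lemma hasSum_pow_mul_rpow_exp {y : ℝ} (hy : 0 < y) (ρ β x : ℝ) :
    HasSum (fun n : ℕ => x ^ n / n.factorial * y ^ (-(β + ρ * n)))
      (y ^ (-β) * Real.exp (x * y ^ (-ρ))) := by
  have h := hasSum_pow_mul_cpow_exp (ofReal_ne_zero.mpr hy.ne') ρ β x
  simp only [← ofReal_cpow hy.le, ← ofReal_mul, ← ofReal_exp] at h
  exact_mod_cast h

lemma wright_eq_hankelIntegral (hδ : δ ∈ Ioo (π / 2) π) (hc : 0 < c) {ρ : ℝ} (hρ : -1 < ρ)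
    (β x : ℝ) : wright ρ β x =
      hankelIntegral δ c fun s => s ^ ((-β : ℝ) : ℂ) * exp (x * s ^ ((-ρ : ℝ) : ℂ)) := by
  have hne : ∀ r > 0, hankelRay δ c r ≠ 0 := fun r hr =>
    hankelRay_ne_zero (sin_pos_of_mem_Ioo_pi_div_two_pi hδ) hc (le_of_lt hr)
  have hsum := hasSum_hankelIntegral (δ := δ) (c := c)
    (F := fun (n : ℕ) s => ((x ^ n / n.factorial : ℝ) : ℂ) * s ^ ((-(β + ρ * n) : ℝ) : ℂ))
    (f := fun s => s ^ ((-β : ℝ) : ℂ) * exp (x * s ^ ((-ρ : ℝ) : ℂ)))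
    (b := fun n s => |x| ^ n / n.factorial * ‖s‖ ^ (-(β + ρ * n)))
    (fun n => by fun_prop) (fun n r _ => ?_) (fun r hr => ?_)
    (hankelIntegrable_cpow_mul_exp hδ hc (-β) (by linarith : -ρ < 1) |x|)
    fun r hr => hasSum_pow_mul_cpow_exp (hne r hr) ρ β x
  · rw [wright, ← hsum.tsum_eq]
    refine tsum_congr fun n => ?_
    rw [hankelIntegral_const_mul, hankelIntegral_cpow hδ hc, neg_neg, ← div_div, div_eq_mul_inv]
  · rw [norm_mul, norm_cpow_real, norm_real, norm_div, norm_pow, Real.norm_eq_abs,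
      Real.norm_natCast]
  · rw [norm_mul, norm_cpow_real, norm_exp, ofReal_re]
    exact hasSum_pow_mul_rpow_exp (norm_pos_iff.mpr (hne r hr)) ρ β |x|

lemma hasSum_pow_mul_cpow_geometric {s : ℂ} (hs : s ≠ 0) {α z : ℝ} (hz : |z| < ‖s‖ ^ α) (β : ℝ) :
    HasSum (fun n : ℕ => ((z ^ n : ℝ) : ℂ) * s ^ ((-(β + α * n) : ℝ) : ℂ))
      (s ^ ((α - β : ℝ) : ℂ) * (s ^ (α : ℂ) - z)⁻¹) := by
  have hpow : s ^ (α : ℂ) ≠ 0 := by simp [cpow_eq_zero_iff, hs]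
  have hratio : ‖z * (s ^ (α : ℂ))⁻¹‖ < 1 := by
    rw [norm_mul, norm_inv, norm_cpow_real, norm_real, ← div_eq_mul_inv]
    exact (div_lt_one ((abs_nonneg z).trans_lt hz)).mpr hz
  have hlimit : s ^ ((α - β : ℝ) : ℂ) * (s ^ (α : ℂ) - z)⁻¹ =
      s ^ ((-β : ℝ) : ℂ) * (1 - z * (s ^ (α : ℂ))⁻¹)⁻¹ := by
    have hfactor : s ^ (α : ℂ) - z = s ^ (α : ℂ) * (1 - z * (s ^ (α : ℂ))⁻¹) := by
      field_simp
    rw [sub_eq_neg_add, ofReal_add, cpow_add _ _ hs, hfactor, mul_inv]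
    field_simp
  rw [hlimit]
  refine ((hasSum_geometric_of_norm_lt_one hratio).mul_left _).congr_fun fun n => ?_
  rw [neg_add, ← neg_mul, cpow_add_mul_natCast hs, ofReal_neg α, cpow_neg, mul_pow]
  push_cast
  ring

lemma mittagLeffler_eq_hankelIntegral (hδ : δ ∈ Ioo (π / 2) π) (hc : 0 < c) {α z T : ℝ} (β : ℝ)
    (hz : |z| < T) (hT : ∀ r > 0, T ≤ ‖hankelRay δ c r‖ ^ α) : mittagLeffler α β z =
      hankelIntegral δ c fun s => s ^ ((α - β : ℝ) : ℂ) * (s ^ (α : ℂ) - z)⁻¹ := by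
  have hne : ∀ r > 0, hankelRay δ c r ≠ 0 := fun r hr =>
    hankelRay_ne_zero (sin_pos_of_mem_Ioo_pi_div_two_pi hδ) hc (le_of_lt hr)
  have hT0 : 0 < T := (abs_nonneg z).trans_lt hz
  have hlt : |z| * T⁻¹ < 1 := by rwa [← div_eq_mul_inv, div_lt_one hT0]
  have hsum := hasSum_hankelIntegral (δ := δ) (c := c)
    (F := fun (n : ℕ) s => ((z ^ n : ℝ) : ℂ) * s ^ ((-(β + α * n) : ℝ) : ℂ))
    (f := fun s => s ^ ((α - β : ℝ) : ℂ) * (s ^ (α : ℂ) - z)⁻¹)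
    (b := fun n s => ‖s‖ ^ (-β) * (|z| * T⁻¹) ^ n)
    (g := fun s => ((1 - |z| * T⁻¹)⁻¹ : ℝ) * s ^ ((-β : ℝ) : ℂ))
    (fun n => by fun_prop) (fun n r hr => ?_) (fun r _ => ?_)
    ((hankelIntegrable_cpow hδ hc (-β)).const_mul _)
    fun r hr => hasSum_pow_mul_cpow_geometric (hne r hr) (hz.trans_le (hT r hr)) β
  · rw [mittagLeffler, ← hsum.tsum_eq]
    refine tsum_congr fun n => ?_
    rw [hankelIntegral_const_mul, hankelIntegral_cpow hδ hc, neg_neg, div_eq_mul_inv]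
  · have hpos : 0 < ‖hankelRay δ c r‖ := norm_pos_iff.mpr (hne r hr)
    rw [norm_mul, norm_cpow_real, norm_real, norm_pow, Real.norm_eq_abs, neg_add, ← neg_mul,
      Real.rpow_add hpos, Real.rpow_mul_natCast hpos.le, Real.rpow_neg hpos.le α, mul_left_comm,
      ← mul_pow]
    gcongr
    exact hT r hr
  · rw [norm_mul, norm_cpow_real, norm_real,
      Real.norm_of_nonneg (inv_nonneg.mpr (sub_nonneg.mpr hlt.le)), mul_comm _ (_ ^ _)]
    exact (hasSum_geometric_of_lt_one (by positivity) hlt).mul_left _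

lemma hankelIntegrand_mul (f g : ℂ → ℂ) (r : ℝ) :
    hankelIntegrand δ c (fun s => f s * g s) r = hankelIntegrand δ c f r * g (hankelRay δ c r) := by
  simp only [hankelIntegrand, mul_assoc]

lemma integrable_hankelIntegrand_mul_exp_neg {g w : ℂ → ℂ} {b : ℝ}
    (hg : HankelIntegrable δ c g) (hw : Measurable w) (hb : 0 < b)
    (hbw : ∀ r > 0, b ≤ (w (hankelRay δ c r)).re) :
    Integrable (fun y : ℝ × ℝ => hankelIntegrand δ c (fun s => g s * exp (-(y.1 * w s))) y.2)
      ((volume.restrict (Ioi 0)).prod (volume.restrict (Ioi 0))) := by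
  simp only [hankelIntegrand_mul]
  refine ((exp_neg_integrableOn_Ioi 0 hb).mul_prod hg.norm).mono' ?_ ?_
  · have hwray : Measurable fun y : ℝ × ℝ => w (hankelRay δ c y.2) :=
      hw.comp (continuous_hankelRay.measurable.comp measurable_snd)
    exact hg.aestronglyMeasurable.comp_snd.mul
      (measurable_fst.complex_ofReal.mul hwray).neg.cexp.aestronglyMeasurable
  · rw [Measure.prod_restrict]
    filter_upwards [ae_restrict_mem (measurableSet_Ioi.prod measurableSet_Ioi)]
      with ⟨x, r⟩ ⟨(hx : 0 < x), (hr : 0 < r)⟩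
    rw [norm_mul, norm_exp, neg_re, re_ofReal_mul, mul_comm, neg_mul, mul_comm b]
    gcongr
    exact hbw r hr

lemma integral_hankelIntegrand_mul_exp_neg (g : ℂ → ℂ) {w : ℂ → ℂ} {r : ℝ}
    (hw : 0 < (w (hankelRay δ c r)).re) :
    ∫ x : ℝ in Ioi 0, hankelIntegrand δ c (fun s => g s * exp (-(x * w s))) r =
      hankelIntegrand δ c (fun s => g s * (w s)⁻¹) r := by
  have hexp := integral_exp_mul_complex_Ioi (a := -w (hankelRay δ c r)) (neg_neg_of_pos hw) 0
  rw [ofReal_zero, mul_zero, exp_zero, neg_div_neg_eq, one_div] at hexp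
  have hcomm : ∀ x : ℝ, -(x * w (hankelRay δ c r)) = -w (hankelRay δ c r) * x :=
    fun x => by ring
  simp only [hankelIntegrand_mul, hcomm, integral_const_mul, hexp]

lemma integrableOn_and_integral_hankelIntegral_mul_exp_neg {g w : ℂ → ℂ} {b : ℝ}
    (hg : HankelIntegrable δ c g) (hw : Measurable w) (hb : 0 < b)
    (hbw : ∀ r > 0, b ≤ (w (hankelRay δ c r)).re) :
    IntegrableOn (fun x : ℝ => hankelIntegral δ c fun s => g s * exp (-(x * w s))) (Ioi 0) ∧
      ∫ x : ℝ in Ioi 0, hankelIntegral δ c (fun s => g s * exp (-(x * w s))) =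
        hankelIntegral δ c fun s => g s * (w s)⁻¹ := by
  let f (x r : ℝ) : ℂ := hankelIntegrand δ c (fun s => g s * exp (-(x * w s))) r
  have hf : Integrable (Function.uncurry f)
      ((volume.restrict (Ioi 0)).prod (volume.restrict (Ioi 0))) :=
    integrable_hankelIntegrand_mul_exp_neg hg hw hb hbw
  refine ⟨hf.integral_prod_left.im.const_mul _, ?_⟩
  simp only [hankelIntegral]
  rw [integral_const_mul]
  congr 1
  calc ∫ x in Ioi 0, (∫ r in Ioi 0, f x r).im
      = (∫ x in Ioi 0, ∫ r in Ioi 0, f x r).im := integral_im hf.integral_prod_left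
    _ = (∫ r in Ioi 0, ∫ x in Ioi 0, f x r).im := by rw [integral_integral_swap hf]
    _ = _ := by
      rw [setIntegral_congr_fun measurableSet_Ioi fun r hr =>
        integral_hankelIntegrand_mul_exp_neg g (hb.trans_le (hbw r hr))]

end SeriesAndLaplace

section Sector

variable {δ c r : ℝ}

lemma arg_hankelRay_mem_Icc (hδ : δ ∈ Ioo 0 π) (hc : 0 < c) (hr : 0 ≤ r) :
    arg (hankelRay δ c r) ∈ Icc 0 δ := by
  have hsin : 0 < Real.sin δ := Real.sin_pos_of_pos_of_lt_pi hδ.1 hδ.2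
  refine ⟨arg_nonneg_iff.mpr (by rw [hankelRay_im]; positivity), ?_⟩
  by_contra! hlt
  have hdiff : 0 < Real.sin (arg (hankelRay δ c r) - δ) :=
    Real.sin_pos_of_pos_of_lt_pi (by linarith) (by linarith [arg_le_pi (hankelRay δ c r), hδ.1])
  have hnorm : ‖hankelRay δ c r‖ * Real.sin (arg (hankelRay δ c r) - δ) = -(c * Real.sin δ) := by
    have hcos := norm_mul_cos_arg (hankelRay δ c r)
    have hsin := norm_mul_sin_arg (hankelRay δ c r)
    rw [hankelRay_re] at hcos
    rw [hankelRay_im] at hsin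
    rw [Real.sin_sub]
    linear_combination Real.cos δ * hsin - Real.sin δ * hcos
  linarith [mul_pos hc hsin, mul_nonneg (norm_nonneg (hankelRay δ c r)) hdiff.le]

lemma le_re_hankelRay_cpow {α : ℝ} (hα : 0 < α) (hδ : δ ∈ Ioo 0 π) (hαδ : α * δ ≤ π / 2)
    (hc : 0 < c) (hr : 0 ≤ r) :
    (c * Real.cos (δ / 2)) ^ α * Real.cos (α * δ) ≤ (hankelRay δ c r ^ (α : ℂ)).re := by
  obtain ⟨harg0, hargδ⟩ := arg_hankelRay_mem_Icc hδ hc hr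
  have hhalf : 0 < Real.cos (δ / 2) :=
    Real.cos_pos_of_mem_Ioo ⟨by linarith [hδ.1, Real.pi_pos], by linarith [hδ.2]⟩
  have hcos : Real.cos (α * δ) ≤ Real.cos (arg (hankelRay δ c r) * α) := by
    refine Real.cos_le_cos_of_nonneg_of_le_pi (by positivity) (by linarith [Real.pi_pos]) ?_
    rw [mul_comm α]; gcongr
  have hcos0 : 0 ≤ Real.cos (α * δ) :=
    Real.cos_nonneg_of_neg_pi_div_two_le_of_le
      (by linarith [mul_pos hα hδ.1, Real.pi_pos]) hαδ
  have hnorm : c * Real.cos (δ / 2) ≤ ‖hankelRay δ c r‖ :=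
    le_trans (by gcongr; linarith) ((le_abs_self _).trans abs_add_mul_cos_half_le_norm_hankelRay)
  rw [cpow_ofReal_re]
  gcongr

lemma exists_hankelRay_le_re_cpow {α : ℝ} (hα : α ∈ Ioo 0 1) (T : ℝ) :
    ∃ δ ∈ Ioo (π / 2) π, ∃ c > 0, ∀ r ≥ 0, T ≤ (hankelRay δ c r ^ (α : ℂ)).re := by
  obtain ⟨hα0, hα1⟩ := hα
  have hδ : π / (1 + α) ∈ Ioo (π / 2) π :=
    ⟨by gcongr; linarith, div_lt_self Real.pi_pos (by linarith)⟩
  have hαδ : α * (π / (1 + α)) < π / 2 := by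
    rw [← mul_div_assoc, div_lt_div_iff₀ (by linarith) two_pos]
    nlinarith [Real.pi_pos]
  have hpos : 0 < α * (π / (1 + α)) := by positivity
  have hcos : 0 < Real.cos (α * (π / (1 + α))) :=
    Real.cos_pos_of_mem_Ioo ⟨by linarith [Real.pi_pos], hαδ⟩
  have htop : Tendsto (fun c : ℝ => (c * Real.cos (π / (1 + α) / 2)) ^ α *
      Real.cos (α * (π / (1 + α)))) atTop atTop :=
    ((tendsto_rpow_atTop hα0).comp
      (tendsto_id.atTop_mul_const (cos_half_pos_of_mem_Ioo_pi_div_two_pi hδ))).atTop_mul_const hcos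
  obtain ⟨c, hcT, hc⟩ := ((htop.eventually_ge_atTop T).and (eventually_gt_atTop 0)).exists
  exact ⟨_, hδ, c, hc, fun r hr => hcT.trans (le_re_hankelRay_cpow hα0
    ⟨Real.pi_div_two_pos.trans hδ.1, hδ.2⟩ hαδ.le hc hr)⟩

end Sector

theorem wright_laplace_general (ρ β t : ℝ) (hρ : ρ ∈ Set.Ioo (-1 : ℝ) 0) :
    IntegrableOn (fun x => wright ρ β (-x) * Real.exp (-(x * t))) (Set.Ioi 0) ∧
    ∫ x in Set.Ioi 0, wright ρ β (-x) * Real.exp (-(x * t)) =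
      mittagLeffler (-ρ) (β - ρ) (-t) := by
  obtain ⟨δ, hδ, c, hc, hre⟩ :=
    exists_hankelRay_le_re_cpow (α := -ρ) ⟨by linarith [hρ.2], by linarith [hρ.1]⟩ (|t| + 1)
  have hwright (x : ℝ) : wright ρ β (-x) * Real.exp (-(x * t)) = hankelIntegral δ c
      fun s => s ^ ((-β : ℝ) : ℂ) * exp (-(x * (s ^ ((-ρ : ℝ) : ℂ) - (-t : ℝ)))) := by
    rw [wright_eq_hankelIntegral hδ hc hρ.1, mul_comm, ← hankelIntegral_const_mul]
    congr 1
    ext s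
    rw [ofReal_exp, mul_left_comm, ← exp_add]
    push_cast
    ring_nf
  have hnorm : ∀ r > 0, |t| + 1 ≤ ‖hankelRay δ c r‖ ^ (-ρ) := fun r hr => by
    rw [← norm_cpow_real]; exact (hre r (le_of_lt hr)).trans (re_le_norm _)
  rw [mittagLeffler_eq_hankelIntegral hδ hc (β - ρ) (by rw [abs_neg]; exact lt_add_one _) hnorm,
    show -ρ - (β - ρ) = -β by ring]
  simp only [hwright]
  refine integrableOn_and_integral_hankelIntegral_mul_exp_neg (hankelIntegrable_cpow hδ hc (-β))
    (by fun_prop) one_pos fun r hr => ?_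
  rw [sub_re, ofReal_re]
  linarith [hre r (le_of_lt hr), neg_abs_le t]

/-- Laplace transform identity: for `ρ ∈ (-1,0)`, `β ∈ ℝ` and `t > 0`,
`∫_0^∞ φ(ρ, β, -x) e^{-xt} dx = E_{-ρ, β-ρ}(-t)`, the integral being absolutely
convergent. -/
theorem wright_laplace (ρ β t : ℝ) (hρ : ρ ∈ Set.Ioo (-1 : ℝ) 0) (ht : 0 < t) :
    IntegrableOn (fun x => wright ρ β (-x) * Real.exp (-(x * t))) (Set.Ioi 0) ∧
    ∫ x in Set.Ioi 0, wright ρ β (-x) * Real.exp (-(x * t)) =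
      mittagLeffler (-ρ) (β - ρ) (-t) :=
  wright_laplace_general ρ β t hρ
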